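/- Let S = F₂[w, x, y, z] / ⟨w³ − 1, x³ − 1, y³ − 1, z⁴ − 1⟩, a 108-dimensional commutative F₂-algebra, and let F = (1 + x)(1 + yz), G = (1 + y)(1 + zw), H = (1 + z)(1 + wx), I = (1 + w)(1 + xy) in S. Let d₂ : S⁶ → S⁴ and d₃ : S⁴ → S⁶ be the S-linear maps given by multiplication by the block matrices D₂ = [[G,H,I,0,0,0],[F,0,0,H,I,0],[0,F,0,G,0,I],[0,0,F,0,G,H]] and D₃ = [[H,I,0,0],[G,0,I,0],[0,G,H,0],[F,0,0,I],[0,F,0,H],[0,0,F,G]], viewed as F₂-linear maps between F₂-vector spaces of dimensions 648 and 432. Then d₂ ∘ d₃ = 0 and dim_{F₂} ker(d₂) − dim_{F₂} im(d₃) = 60; i.e., this multivariate multicycle code encodes k = 60 logical qubits in n = 648 physical qubits. -/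

import Mathlib

open MvPolynomial Matrix

set_option synthInstance.maxHeartbeats 1000000
set_option maxHeartbeats 2000000

noncomputable section

/-- The ideal `⟨w³−1, x³−1, y³−1, z⁴−1⟩` in `𝔽₂[w,x,y,z]`. -/
def relIdeal : Ideal (MvPolynomial (Fin 4) (ZMod 2)) :=
  Ideal.span {X 0 ^ 3 - 1, X 1 ^ 3 - 1, X 2 ^ 3 - 1, X 3 ^ 4 - 1}

/-- The 108-dimensional commutative `𝔽₂`-algebra
`S = 𝔽₂[w,x,y,z]/⟨w³−1, x³−1, y³−1, z⁴−1⟩`. -/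
abbrev Squot : Type := MvPolynomial (Fin 4) (ZMod 2) ⧸ relIdeal

def wq : Squot := Ideal.Quotient.mk relIdeal (X 0)
def xq : Squot := Ideal.Quotient.mk relIdeal (X 1)
def yq : Squot := Ideal.Quotient.mk relIdeal (X 2)
def zq : Squot := Ideal.Quotient.mk relIdeal (X 3)

/-- `F = (1 + x)(1 + yz)`. -/ def Fq : Squot := (1 + xq) * (1 + yq * zq)
/-- `G = (1 + y)(1 + zw)`. -/ def Gq : Squot := (1 + yq) * (1 + zq * wq)
/-- `H = (1 + z)(1 + wx)`. -/ def Hq : Squot := (1 + zq) * (1 + wq * xq)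
/-- `I = (1 + w)(1 + xy)`. -/ def Iq : Squot := (1 + wq) * (1 + xq * yq)

/-- Second Koszul boundary map `D₂`. -/
def D2 : Matrix (Fin 4) (Fin 6) Squot :=
  !![Gq, Hq, Iq, 0, 0, 0;
     Fq, 0, 0, Hq, Iq, 0;
     0, Fq, 0, Gq, 0, Iq;
     0, 0, Fq, 0, Gq, Hq]

/-- Third Koszul boundary map `D₃`. -/
def D3 : Matrix (Fin 6) (Fin 4) Squot :=
  !![Hq, Iq, 0, 0;
     Gq, 0, Iq, 0;
     0, Gq, Hq, 0;
     Fq, 0, 0, Iq;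
     0, Fq, 0, Hq;
     0, 0, Fq, Gq]

/-!
The zero locus of `(F, G, H, I)` in `Spec S = μ₃ × μ₃ × μ₃ × μ₄` is the union of the four coordinate
axes through `(1, 1, 1, 1)`: these four elements generate the ideal of all products
`(s - 1)(t - 1)` with `s ≠ t` among `w, x, y, z`, and the monomials in a single variable form a
basis of the quotient, which therefore has dimension `1 + 2 + 2 + 2 + 3 = 10`.

On each connected component of `Spec S`, hence globally, the vector `(F, G, H, I)` is a scalar `e`
times a unimodular vector `f`. The Koszul complex of `f` is contractible, so multiplication by `e`
maps `ker d₂ = ker (e • K₂(f))` onto `range d₃ = range (e • K₃(f))`, and its kernel is the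
`e`-torsion of `S⁶`, of the same dimension as `(S ⧸ (e))⁶ = (S ⧸ (F, G, H, I))⁶`. The difference is
`6 * 10`.
-/

section RootsOfUnityAlgebra

variable {ι : Type*} (K : Type*) [CommRing K] (n : ι → ℕ)

/-- The ideal `⟨Xᵢ ^ nᵢ - 1⟩` cutting out the product `∏ᵢ μ_{nᵢ}` of group schemes of roots of
unity; `relIdeal` is the case `n = (3, 3, 3, 4)` over `𝔽₂`. -/
def rootsOfUnityIdeal : Ideal (MvPolynomial ι K) :=
  Ideal.span (Set.range fun i => X i ^ n i - 1)

variable {K n} in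
lemma mk_X_pow (i : ι) : Ideal.Quotient.mk (rootsOfUnityIdeal K n) (X i) ^ n i = 1 := by
  rw [← map_pow, ← map_one (Ideal.Quotient.mk _), Ideal.Quotient.mk_eq_mk_iff_sub_mem]
  exact Ideal.subset_span ⟨i, rfl⟩

variable [DecidableEq ι]

/-- The `i`-th coordinate function of `∏ᵢ μ_{nᵢ}`, as an element of the group algebra
`K[∏ᵢ ℤ/nᵢ]`. -/
def groupCoord (i : ι) : AddMonoidAlgebra K (∀ i, ZMod (n i)) :=
  AddMonoidAlgebra.single (Pi.single i 1) 1

variable {K n}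

lemma groupCoord_pow_self (i : ι) : groupCoord K n i ^ n i = 1 := by
  rw [groupCoord, AddMonoidAlgebra.single_pow, one_pow, ← Pi.single_smul, nsmul_one,
    ZMod.natCast_self, Pi.single_zero, AddMonoidAlgebra.one_def]

lemma groupCoord_pow_val [∀ i, NeZero (n i)] (i : ι) (a : ZMod (n i)) :
    groupCoord K n i ^ a.val = AddMonoidAlgebra.single (Pi.single i a) 1 := by
  rw [groupCoord, AddMonoidAlgebra.single_pow, one_pow, ← Pi.single_smul, nsmul_one,
    ZMod.natCast_zmod_val]

variable (K n) in
/-- The map from the coordinate ring of `∏ᵢ μ_{nᵢ}` to the group algebra of `∏ᵢ ℤ/nᵢ` sending each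
variable to the corresponding coordinate function. -/
def toGroupAlgebra :
    (MvPolynomial ι K ⧸ rootsOfUnityIdeal K n) →ₐ[K] AddMonoidAlgebra K (∀ i, ZMod (n i)) :=
  Ideal.Quotient.liftₐ _ (aeval (groupCoord K n)) <| by
    suffices rootsOfUnityIdeal K n ≤ RingHom.ker (aeval (groupCoord K n)) from
      fun _ hp => this hp
    rw [rootsOfUnityIdeal, Ideal.span_le]
    rintro _ ⟨i, rfl⟩
    simp [RingHom.mem_ker, groupCoord_pow_self]

lemma toGroupAlgebra_mk_X (i : ι) :
    toGroupAlgebra K n (Ideal.Quotient.mk _ (X i)) = groupCoord K n i :=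
  (Ideal.Quotient.lift_mk _ _ _).trans (aeval_X _ i)

variable [Fintype ι]

lemma prod_groupCoord_pow_val [∀ i, NeZero (n i)] (g : ∀ i, ZMod (n i)) :
    ∏ i, groupCoord K n i ^ (g i).val = AddMonoidAlgebra.single g 1 := by
  simp_rw [groupCoord_pow_val]
  simp [AddMonoidAlgebra.prod_single, Finset.univ_sum_single]

lemma pow_val_add {M : Type*} [Monoid M] {m : ℕ} [NeZero m] {x : M} (hx : x ^ m = 1)
    (a b : ZMod m) : x ^ (a + b).val = x ^ a.val * x ^ b.val := by
  rw [ZMod.val_add, ← pow_eq_pow_mod _ hx, pow_add]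

/-- The homomorphism `g ↦ ∏ᵢ xᵢ ^ gᵢ` on `∏ᵢ ℤ/nᵢ`, for elements with `xᵢ ^ nᵢ = 1`. -/
def monomialHom [∀ i, NeZero (n i)] {M : Type*} [CommMonoid M] (x : ι → M)
    (hx : ∀ i, x i ^ n i = 1) : Multiplicative (∀ i, ZMod (n i)) →* M where
  toFun g := ∏ i, x i ^ (g.toAdd i).val
  map_one' := by simp
  map_mul' g h := by
    simp only [toAdd_mul, Pi.add_apply, pow_val_add (hx _), Finset.prod_mul_distrib]

lemma monomialHom_single_one [∀ i, NeZero (n i)] {M : Type*} [CommMonoid M] (x : ι → M)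
    (hx : ∀ i, x i ^ n i = 1) (i : ι) :
    monomialHom x hx (Multiplicative.ofAdd (Pi.single i 1)) = x i := by
  change ∏ j, x j ^ (Pi.single (M := fun j => ZMod (n j)) i 1 j).val = x i
  rw [Fintype.prod_eq_single i fun j hj => by
    rw [Pi.single_eq_of_ne hj, ZMod.val_zero, pow_zero]]
  rw [Pi.single_eq_same, ZMod.val_one_eq_one_mod, ← pow_eq_pow_mod _ (hx i), pow_one]

variable (K n) [∀ i, NeZero (n i)]

/-- The coordinate ring of `∏ᵢ μ_{nᵢ}` is the group algebra of the dual group `∏ᵢ ℤ/nᵢ`. -/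
def rootsOfUnityEquiv :
    (MvPolynomial ι K ⧸ rootsOfUnityIdeal K n) ≃ₐ[K] AddMonoidAlgebra K (∀ i, ZMod (n i)) :=
  AlgEquiv.ofAlgHom (toGroupAlgebra K n) (AddMonoidAlgebra.lift K _ _ (monomialHom _ mk_X_pow))
    (AlgHom.toLinearMap_injective <| (AddMonoidAlgebra.basis _ K).ext fun g => by
      simp [monomialHom, toGroupAlgebra_mk_X, prod_groupCoord_pow_val])
    (Ideal.Quotient.algHom_ext _ <| MvPolynomial.algHom_ext fun i => by
      simp [toGroupAlgebra_mk_X, groupCoord, monomialHom_single_one])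

lemma rootsOfUnityEquiv_mk_X (i : ι) :
    rootsOfUnityEquiv K n (Ideal.Quotient.mk _ (X i)) = groupCoord K n i :=
  toGroupAlgebra_mk_X i

end RootsOfUnityAlgebra

lemma finrank_rootsOfUnityAlgebra {ι : Type*} [Fintype ι] (K : Type*) [CommRing K] [Nontrivial K]
    (n : ι → ℕ) [∀ i, NeZero (n i)] :
    Module.finrank K (MvPolynomial ι K ⧸ rootsOfUnityIdeal K n) = ∏ i, n i := by
  classical
  rw [(rootsOfUnityEquiv K n).toLinearEquiv.finrank_eq,
    Module.finrank_eq_card_basis (AddMonoidAlgebra.basis _ K)]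
  simp [ZMod.card]

section CrossIdeal

variable {ι R : Type*} [CommRing R]

/-- The ideal `⟨(xᵢ - 1)(xⱼ - 1) : i ≠ j⟩` of the union of the coordinate axes through the point
`(1, …, 1)`. -/
def crossIdeal (x : ι → R) : Ideal R :=
  Ideal.span {r | ∃ i j, i ≠ j ∧ (x i - 1) * (x j - 1) = r}

lemma mul_mem_crossIdeal (x : ι → R) {i j : ι} (hij : i ≠ j) :
    (x i - 1) * (x j - 1) ∈ crossIdeal x :=
  Ideal.subset_span ⟨i, j, hij, rfl⟩

lemma crossIdeal_le {x : ι → R} {J : Ideal R}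
    (h : ∀ i j, i ≠ j → (x i - 1) * (x j - 1) ∈ J) : crossIdeal x ≤ J := by
  rw [crossIdeal, Ideal.span_le]
  rintro _ ⟨i, j, hij, rfl⟩
  exact h i j hij

lemma map_crossIdeal {R' : Type*} [CommRing R'] (φ : R →+* R') (x : ι → R) :
    (crossIdeal x).map φ = crossIdeal (φ ∘ x) := by
  rw [crossIdeal, Ideal.map_span, crossIdeal]
  congr 1
  ext r
  simp only [Set.mem_image, Set.mem_ofPred_eq, Function.comp_apply]
  constructor
  · rintro ⟨_, ⟨i, j, hij, rfl⟩, rfl⟩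
    exact ⟨i, j, hij, by simp⟩
  · rintro ⟨i, j, hij, rfl⟩
    exact ⟨_, ⟨i, j, hij, rfl⟩, by simp⟩

lemma pow_sub_one_mul_pow_sub_one_mem_crossIdeal (x : ι → R) {i j : ι} (hij : i ≠ j) (a b : ℕ) :
    (x i ^ a - 1) * (x j ^ b - 1) ∈ crossIdeal x :=
  Ideal.mem_of_dvd _ (mul_dvd_mul (sub_one_dvd_pow_sub_one _ a) (sub_one_dvd_pow_sub_one _ b))
    (mul_mem_crossIdeal x hij)

lemma prod_sub_one_add_sum_mem {J : Ideal R} {u : ι → R}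
    (hu : ∀ i j, i ≠ j → (u i - 1) * (u j - 1) ∈ J) (s : Finset ι) :
    ∏ i ∈ s, u i - (1 + ∑ i ∈ s, (u i - 1)) ∈ J := by
  classical
  induction s using Finset.induction_on with
  | empty => simp
  | insert k s hk ih =>
    have hcross : (u k - 1) * ∑ i ∈ s, (u i - 1) ∈ J := by
      rw [Finset.mul_sum]
      exact J.sum_mem fun i hi => hu k i (ne_of_mem_of_not_mem hi hk).symm
    rw [Finset.prod_insert hk, Finset.sum_insert hk]
    convert J.add_mem (J.mul_mem_left (u k) ih) hcross using 1
    ring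

end CrossIdeal

section AxisRetraction

variable {ι : Type*} [DecidableEq ι] {K : Type*} [CommRing K] {n : ι → ℕ}

/-- The elements of `∏ᵢ ℤ/nᵢ` with at most one nonzero coordinate: `none` stands for `0`. -/
def axisPoint : Option (Σ i, {a : ZMod (n i) // a ≠ 0}) → ∀ i, ZMod (n i)
  | none => 0
  | some ⟨i, a⟩ => Pi.single i a

lemma axisPoint_injective : Function.Injective (axisPoint (n := n)) := by
  rintro (_ | ⟨i, a, ha⟩) (_ | ⟨j, b, hb⟩) h
  · rfl
  · exact absurd (Pi.single_eq_zero_iff.1 h.symm) hb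
  · exact absurd (Pi.single_eq_zero_iff.1 h) ha
  · have hval : Pi.single (M := fun i => ZMod (n i)) i a = Pi.single j b := h
    obtain rfl : i = j := by
      by_contra hij
      exact ha (by simpa [hij] using congrFun hval i)
    obtain rfl : a = b := Pi.single_injective i hval
    rfl

lemma exists_axisPoint_eq_single (i : ι) (a : ZMod (n i)) :
    ∃ o, axisPoint (n := n) o = Pi.single i a := by
  by_cases ha : a = 0
  · exact ⟨none, by rw [ha, Pi.single_zero]; rfl⟩
  · exact ⟨some ⟨i, a, ha⟩, rfl⟩

variable [Fintype ι]

variable (K n) in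
/-- The linear endomorphism of `K[∏ᵢ ℤ/nᵢ]` taking a monomial `∏ᵢ xᵢ ^ gᵢ` to
`1 + ∑ᵢ (xᵢ ^ gᵢ - 1)`, to which it is congruent modulo the cross ideal. -/
def axisRetraction :
    AddMonoidAlgebra K (∀ i, ZMod (n i)) →ₗ[K] AddMonoidAlgebra K (∀ i, ZMod (n i)) :=
  (AddMonoidAlgebra.basis _ K).constr K fun g =>
    1 + ∑ i, (AddMonoidAlgebra.single (Pi.single i (g i)) 1 - 1)

lemma axisRetraction_single (g : ∀ i, ZMod (n i)) :
    axisRetraction K n (AddMonoidAlgebra.single g 1) =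
      1 + ∑ i, (AddMonoidAlgebra.single (Pi.single i (g i)) 1 - 1) := by
  rw [← AddMonoidAlgebra.basis_apply, axisRetraction, Module.Basis.constr_basis]

lemma sub_axisRetraction_mem [∀ i, NeZero (n i)] (s : AddMonoidAlgebra K (∀ i, ZMod (n i))) :
    s - axisRetraction K n s ∈ crossIdeal (groupCoord K n) := by
  suffices h : (Ideal.Quotient.mkₐ K (crossIdeal (groupCoord K n))).toLinearMap ∘ₗ
      (LinearMap.id - axisRetraction K n) = 0 from
    Ideal.Quotient.eq_zero_iff_mem.1 (LinearMap.congr_fun h s)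
  refine (AddMonoidAlgebra.basis _ K).ext fun g => Ideal.Quotient.eq_zero_iff_mem.2 ?_
  change AddMonoidAlgebra.basis _ K g - axisRetraction K n (AddMonoidAlgebra.basis _ K g) ∈ _
  rw [AddMonoidAlgebra.basis_apply, axisRetraction_single, ← prod_groupCoord_pow_val]
  simp_rw [← groupCoord_pow_val]
  exact prod_sub_one_add_sum_mem
    (fun i j hij => pow_sub_one_mul_pow_sub_one_mem_crossIdeal _ hij _ _) _

lemma axisRetraction_mul_sub_one_mul_sub_one {i j : ι} (hij : i ≠ j)
    (s : AddMonoidAlgebra K (∀ i, ZMod (n i))) :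
    axisRetraction K n (s * ((groupCoord K n i - 1) * (groupCoord K n j - 1))) = 0 := by
  suffices h : axisRetraction K n ∘ₗ
      LinearMap.mulRight K ((groupCoord K n i - 1) * (groupCoord K n j - 1)) = 0 from
    LinearMap.congr_fun h s
  refine (AddMonoidAlgebra.basis _ K).ext fun g => ?_
  have hexpand : AddMonoidAlgebra.single g 1 * ((groupCoord K n i - 1) * (groupCoord K n j - 1)) =
      AddMonoidAlgebra.single (g + Pi.single i 1 + Pi.single j 1) 1 -
        AddMonoidAlgebra.single (g + Pi.single i 1) 1 -
        (AddMonoidAlgebra.single (g + Pi.single j 1) 1 - AddMonoidAlgebra.single g 1) := by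
    simp only [groupCoord, mul_sub, sub_mul, AddMonoidAlgebra.single_mul_single, mul_one, one_mul,
      add_assoc]
    abel
  simp only [LinearMap.comp_apply, LinearMap.mulRight_apply, AddMonoidAlgebra.basis_apply, hexpand,
    map_sub, axisRetraction_single, LinearMap.zero_apply, add_sub_add_left_eq_sub,
    ← Finset.sum_sub_distrib]
  refine Finset.sum_eq_zero fun k _ => ?_
  rcases eq_or_ne k i with rfl | hki
  · simp [hij]
  · simp [hki]

lemma axisRetraction_eq_zero_iff [∀ i, NeZero (n i)] {s : AddMonoidAlgebra K (∀ i, ZMod (n i))} :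
    axisRetraction K n s = 0 ↔ s ∈ crossIdeal (groupCoord K n) := by
  refine ⟨fun hs => by simpa [hs] using sub_axisRetraction_mem s, fun hs => ?_⟩
  suffices ∀ t, axisRetraction K n (t * s) = 0 by simpa using this 1
  induction hs using Submodule.span_induction with
  | mem s hs =>
    obtain ⟨i, j, hij, rfl⟩ := hs
    exact axisRetraction_mul_sub_one_mul_sub_one hij
  | zero => simp
  | add s s' _ _ hs hs' => simp [mul_add, hs, hs']
  | smul c s _ hs => exact fun t => by rw [smul_eq_mul, ← mul_assoc, hs]

lemma axisRetraction_single_axisPoint (o : Option (Σ i, {a : ZMod (n i) // a ≠ 0})) :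
    axisRetraction K n (AddMonoidAlgebra.single (axisPoint o) 1) =
      AddMonoidAlgebra.single (axisPoint o) 1 := by
  rw [axisRetraction_single]
  rcases o with _ | ⟨i, a, ha⟩
  · simp [axisPoint, AddMonoidAlgebra.one_def]
  · simp only [axisPoint]
    rw [Fintype.sum_eq_single i fun k hk => by
      rw [Pi.single_eq_of_ne hk, Pi.single_zero, ← AddMonoidAlgebra.one_def, sub_self]]
    rw [Pi.single_eq_same, add_sub_cancel]

lemma range_axisRetraction :
    LinearMap.range (axisRetraction K n) =
      Submodule.span K (Set.range (AddMonoidAlgebra.basis _ K ∘ axisPoint (n := n))) := by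
  have hmem (o) : AddMonoidAlgebra.single (axisPoint o) 1 ∈
      Submodule.span K (Set.range (AddMonoidAlgebra.basis _ K ∘ axisPoint (n := n))) :=
    Submodule.subset_span ⟨o, AddMonoidAlgebra.basis_apply _ _⟩
  apply le_antisymm
  · rw [LinearMap.range_eq_map, ← (AddMonoidAlgebra.basis _ K).span_eq, Submodule.map_span_le]
    rintro _ ⟨g, rfl⟩
    rw [AddMonoidAlgebra.basis_apply, axisRetraction_single]
    refine add_mem (hmem none) (sum_mem fun i _ => sub_mem ?_ (hmem none))
    obtain ⟨o, ho⟩ := exists_axisPoint_eq_single i (g i)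
    exact ho ▸ hmem o
  · rw [Submodule.span_le]
    rintro _ ⟨o, rfl⟩
    exact ⟨_, by simpa using axisRetraction_single_axisPoint o⟩

lemma finrank_quotient_crossIdeal_groupCoord [Nontrivial K] [∀ i, NeZero (n i)] :
    Module.finrank K (AddMonoidAlgebra K (∀ i, ZMod (n i)) ⧸ crossIdeal (groupCoord K n)) =
      1 + ∑ i, (n i - 1) := by
  have hker : (crossIdeal (groupCoord K n)).restrictScalars K =
      LinearMap.ker (axisRetraction K n) := by
    ext s
    exact axisRetraction_eq_zero_iff.symm
  have hindep :=
    (AddMonoidAlgebra.basis _ K).linearIndependent.comp _ (axisPoint_injective (n := n))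
  rw [← (Submodule.Quotient.restrictScalarsEquiv K _).finrank_eq, hker,
    (axisRetraction K n).quotKerEquivRange.finrank_eq, range_axisRetraction,
    finrank_span_eq_card hindep]
  simp [Fintype.card_subtype_compl, ZMod.card, add_comm]

end AxisRetraction

lemma finrank_quotient_crossIdeal {ι : Type*} [Fintype ι] (K : Type*) [CommRing K] [Nontrivial K]
    (n : ι → ℕ) [∀ i, NeZero (n i)] :
    Module.finrank K ((MvPolynomial ι K ⧸ rootsOfUnityIdeal K n) ⧸
      crossIdeal fun i => Ideal.Quotient.mk (rootsOfUnityIdeal K n) (X i)) =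
      1 + ∑ i, (n i - 1) := by
  classical
  have hmap : crossIdeal (groupCoord K n) =
      (crossIdeal fun i => Ideal.Quotient.mk (rootsOfUnityIdeal K n) (X i)).map
        (rootsOfUnityEquiv K n : _ →+* AddMonoidAlgebra K (∀ i, ZMod (n i))) := by
    rw [map_crossIdeal]
    exact congrArg crossIdeal (funext fun i => (rootsOfUnityEquiv_mk_X K n i).symm)
  rw [(Ideal.quotientEquivAlg _ _ (rootsOfUnityEquiv K n) hmap).toLinearEquiv.finrank_eq,
    finrank_quotient_crossIdeal_groupCoord]

section Koszul

variable {S : Type*} [CommRing S]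

/-- The Koszul differential `Λ²S⁴ → S⁴` of four elements in characteristic two, where no signs are
needed. The basis of `Λ²S⁴` is ordered lexicographically. -/
def koszulTwo (f : Fin 4 → S) : Matrix (Fin 4) (Fin 6) S :=
  !![f 1, f 2, f 3, 0, 0, 0;
     f 0, 0, 0, f 2, f 3, 0;
     0, f 0, 0, f 1, 0, f 3;
     0, 0, f 0, 0, f 1, f 2]

/-- The Koszul differential `Λ³S⁴ → Λ²S⁴` of four elements in characteristic two, in lexicographic
bases. -/
def koszulThree (f : Fin 4 → S) : Matrix (Fin 6) (Fin 4) S :=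
  !![f 2, f 3, 0, 0;
     f 1, 0, f 3, 0;
     0, f 1, f 2, 0;
     f 0, 0, 0, f 3;
     0, f 0, 0, f 2;
     0, 0, f 0, f 1]

lemma koszulTwo_smul (e : S) (f : Fin 4 → S) : koszulTwo (e • f) = e • koszulTwo f := by
  ext i j; fin_cases i <;> fin_cases j <;> simp [koszulTwo]

lemma koszulThree_smul (e : S) (f : Fin 4 → S) : koszulThree (e • f) = e • koszulThree f := by
  ext i j; fin_cases i <;> fin_cases j <;> simp [koszulThree]

variable [CharP S 2]

lemma koszulTwo_mul_koszulThree (f : Fin 4 → S) : koszulTwo f * koszulThree f = 0 := by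
  ext i j
  rw [Matrix.mul_apply, Matrix.zero_apply]
  fin_cases i <;> fin_cases j <;>
    simp only [koszulTwo, koszulThree, Fin.sum_univ_six, Fin.reduceFinMk, Matrix.of_apply,
      Matrix.cons_val] <;> grind

-- Contraction with `a` is a homotopy from `a ⬝ᵥ f` to `0`.
lemma koszulThree_mul_transpose_add (f a : Fin 4 → S) :
    koszulThree f * (koszulThree a)ᵀ + (koszulTwo a)ᵀ * koszulTwo f = (a ⬝ᵥ f) • 1 := by
  ext i j
  rw [Matrix.add_apply, Matrix.mul_apply, Matrix.mul_apply, Matrix.smul_apply, Matrix.one_apply,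
    smul_eq_mul]
  fin_cases i <;> fin_cases j <;>
    simp only [koszulTwo, koszulThree, dotProduct, Fin.sum_univ_four, Fin.reduceFinMk,
      Matrix.transpose_apply, Matrix.of_apply, Matrix.cons_val] <;> grind

end Koszul

section ScaledHomology

variable {K : Type*} [Field K]

lemma finrank_map_add_finrank_ker_of_ker_le {V W : Type*} [AddCommGroup V] [Module K V]
    [FiniteDimensional K V] [AddCommGroup W] [Module K W] (φ : V →ₗ[K] W) {N : Submodule K V}
    (hN : LinearMap.ker φ ≤ N) :
    Module.finrank K (N.map φ) + Module.finrank K (LinearMap.ker φ) = Module.finrank K N := by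
  rw [← (φ.domRestrict N).finrank_range_add_finrank_ker, LinearMap.range_domRestrict,
    LinearMap.ker_domRestrict, (Submodule.comapSubtypeEquivOfLe hN).finrank_eq]

variable {S : Type*} [CommRing S] [Algebra K S] {l m o : Type*}

lemma range_lsmul_pi (e : S) :
    LinearMap.range (Algebra.lsmul K K (m → S) e) =
      (Submodule.pi Set.univ fun _ : m => Ideal.span {e}).restrictScalars K := by
  ext v
  simp only [LinearMap.mem_range, Algebra.lsmul_coe, Submodule.restrictScalars_mem,
    Submodule.mem_pi, Set.mem_univ, true_imp_iff, Ideal.mem_span_singleton', funext_iff,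
    Pi.smul_apply, smul_eq_mul, mul_comm e]
  exact (Classical.skolem (p := fun i a => a * e = v i)).symm

variable [FiniteDimensional K S] [Fintype m]

lemma finrank_ker_lsmul_pi (e : S) :
    Module.finrank K (LinearMap.ker (Algebra.lsmul K K (m → S) e)) =
      Fintype.card m * Module.finrank K (S ⧸ Ideal.span {e}) := by
  classical
  have hcoker : Module.finrank K ((m → S) ⧸ LinearMap.range (Algebra.lsmul K K (m → S) e)) =
      Fintype.card m * Module.finrank K (S ⧸ Ideal.span {e}) := by
    rw [range_lsmul_pi, (Submodule.Quotient.restrictScalarsEquiv K _).finrank_eq,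
      ((Submodule.quotientPi fun _ : m => Ideal.span {e}).restrictScalars K).finrank_eq,
      Module.finrank_pi_fintype, Finset.sum_const, smul_eq_mul, Finset.card_univ]
  have hrank := (Algebra.lsmul K K (m → S) e).finrank_range_add_finrank_ker
  have hquot := (LinearMap.range (Algebra.lsmul K K (m → S) e)).finrank_quotient_add_finrank
  lia

variable [Fintype l] [Fintype o] [DecidableEq m]

-- Multiplication by `e` maps `ker (e • A)` onto `range (e • B)`, and its kernel is the `e`-torsion.
lemma finrank_ker_smul_mulVecLin {A : Matrix l m S} {B : Matrix m o S} {A' : Matrix m l S}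
    {B' : Matrix o m S} (hAB : A * B = 0) (hhomotopy : B * B' + A' * A = 1) (e : S) :
    Module.finrank K (LinearMap.ker ((e • A).mulVecLin.restrictScalars K)) =
      Module.finrank K (LinearMap.range ((e • B).mulVecLin.restrictScalars K)) +
        Fintype.card m * Module.finrank K (S ⧸ Ideal.span {e}) := by
  set N := LinearMap.ker ((e • A).mulVecLin.restrictScalars K)
  have hker : LinearMap.ker (Algebra.lsmul K K (m → S) e) ≤ N := by
    intro v hv
    have hv : e • v = 0 := hv
    change (e • A) *ᵥ v = 0
    rw [Matrix.smul_mulVec, ← Matrix.mulVec_smul, hv, Matrix.mulVec_zero]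
  have hmap : N.map (Algebra.lsmul K K (m → S) e) =
      LinearMap.range ((e • B).mulVecLin.restrictScalars K) := by
    apply le_antisymm
    · rintro _ ⟨v, hv, rfl⟩
      have hv : (e • A) *ᵥ v = 0 := hv
      refine ⟨B' *ᵥ v, ?_⟩
      change (e • B) *ᵥ (B' *ᵥ v) = e • v
      calc (e • B) *ᵥ (B' *ᵥ v) = (e • B) *ᵥ (B' *ᵥ v) + A' *ᵥ ((e • A) *ᵥ v) := by
            rw [hv, Matrix.mulVec_zero, add_zero]
        _ = e • ((B * B' + A' * A) *ᵥ v) := by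
            simp [Matrix.add_mulVec, Matrix.smul_mulVec, Matrix.mulVec_smul]
        _ = e • v := by rw [hhomotopy, Matrix.one_mulVec]
    · rintro _ ⟨u, rfl⟩
      refine ⟨B *ᵥ u, ?_, (Matrix.smul_mulVec e B u).symm⟩
      change (e • A) *ᵥ (B *ᵥ u) = 0
      rw [Matrix.mulVec_mulVec, Matrix.smul_mul, hAB, smul_zero, Matrix.zero_mulVec]
  rw [← finrank_map_add_finrank_ker_of_ker_le _ hker, hmap, finrank_ker_lsmul_pi]

end ScaledHomology

section UnimodularMultiple

variable {ι S : Type*} [Fintype ι] [CommRing S]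

/-- On the locus where `E` is invertible, `v` is a multiple `e • f` of a unimodular vector `f`.
For `E = 1` this is a global factorisation; for an idempotent `E` it is a factorisation over the
component `E * S` of `S`. -/
def IsUnimodularMultipleOn (E : S) (v : ι → S) : Prop :=
  ∃ (e : S) (f a : ι → S), (∀ j, E * v j = E * (e * f j)) ∧ E * (a ⬝ᵥ f) = E

namespace IsUnimodularMultipleOn

variable {E : S} {v : ι → S}

lemma of_idempotent {p : S} (hp : IsIdempotentElem p) (h₁ : IsUnimodularMultipleOn (E * p) v)
    (h₀ : IsUnimodularMultipleOn (E * (1 - p)) v) : IsUnimodularMultipleOn E v := by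
  obtain ⟨e₁, f₁, a₁, hv₁, ha₁⟩ := h₁
  obtain ⟨e₀, f₀, a₀, hv₀, ha₀⟩ := h₀
  have hp : p * p = p := hp
  refine ⟨p * e₁ + (1 - p) * e₀, p • f₁ + (1 - p) • f₀, p • a₁ + (1 - p) • a₀, fun j => ?_, ?_⟩
  · simp only [Pi.add_apply, Pi.smul_apply, smul_eq_mul]
    grind
  · simp only [dotProduct_add, add_dotProduct, smul_dotProduct, dotProduct_smul, smul_eq_mul]
    grind

lemma of_forall_mul_eq {k : ι} (c : ι → S) (hk : E * c k = E)
    (h : ∀ j, E * v j = E * (v k * c j)) : IsUnimodularMultipleOn E v := by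
  classical
  exact ⟨v k, c, Pi.single k 1, h, by simpa using hk⟩

lemma of_mul_eq_self {k : ι} (u : S) (hu : E * (v k * u) = E) :
    IsUnimodularMultipleOn E v := by
  classical
  exact ⟨1, v, Pi.single k u, fun j => by rw [one_mul], by simpa [mul_comm u] using hu⟩

lemma exists_smul_eq (h : IsUnimodularMultipleOn 1 v) :
    ∃ (e : S) (f a : ι → S), v = e • f ∧ a ⬝ᵥ f = 1 := by
  simpa [IsUnimodularMultipleOn, funext_iff] using h

end IsUnimodularMultipleOn

lemma span_range_smul_eq {f a : ι → S} (haf : a ⬝ᵥ f = 1) (e : S) :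
    Ideal.span (Set.range (e • f)) = Ideal.span {e} := by
  apply le_antisymm
  · rw [Ideal.span_le]
    rintro _ ⟨i, rfl⟩
    exact Ideal.mul_mem_right _ _ (Ideal.mem_span_singleton_self e)
  · rw [Ideal.span_singleton_le_iff_mem]
    have hcomb : ∑ i, a i * (e • f) i = e := by
      rw [← dotProduct, dotProduct_smul, haf, smul_eq_mul, mul_one]
    have hmem : ∑ i, a i * (e • f) i ∈ Ideal.span (Set.range (e • f)) :=
      Ideal.sum_mem _ fun i _ => Ideal.mul_mem_left _ _ (Ideal.subset_span ⟨i, rfl⟩)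
    rwa [hcomb] at hmem

end UnimodularMultiple

lemma finrank_ker_koszulTwo {K S : Type*} [Field K] [CommRing S] [CharP S 2] [Algebra K S]
    [FiniteDimensional K S] {v : Fin 4 → S} (hv : IsUnimodularMultipleOn 1 v) :
    Module.finrank K (LinearMap.ker ((koszulTwo v).mulVecLin.restrictScalars K)) =
      Module.finrank K (LinearMap.range ((koszulThree v).mulVecLin.restrictScalars K)) +
        6 * Module.finrank K (S ⧸ Ideal.span (Set.range v)) := by
  obtain ⟨e, f, a, rfl, haf⟩ := hv.exists_smul_eq
  have hhomotopy : koszulThree f * (koszulThree a)ᵀ + (koszulTwo a)ᵀ * koszulTwo f = 1 := by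
    rw [koszulThree_mul_transpose_add, haf, one_smul]
  rw [span_range_smul_eq haf, koszulTwo_smul, koszulThree_smul,
    finrank_ker_smul_mulVecLin (koszulTwo_mul_koszulThree f) hhomotopy, Fintype.card_fin]

section CodeVector

variable {S : Type*} [CommRing S]

/-- The vector `(F, G, H, I)` of the code, for elements `w`, `x`, `y`, `z` of an arbitrary ring. -/
def codeVector (w x y z : S) : Fin 4 → S :=
  ![(1 + x) * (1 + y * z), (1 + y) * (1 + z * w), (1 + z) * (1 + w * x), (1 + w) * (1 + x * y)]

variable [CharP S 2] {w x y z : S}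

lemma isIdempotentElem_one_add_add_sq (hx : x ^ 3 = 1) : IsIdempotentElem (1 + x + x ^ 2) := by
  unfold IsIdempotentElem
  grind

-- The idempotent `1 + t + t ^ 2` cuts out the component of the spectrum on which `t = 1`.
lemma isUnimodularMultipleOn_one_codeVector (hw : w ^ 3 = 1) (hx : x ^ 3 = 1) (hy : y ^ 3 = 1)
    (hz : z ^ 4 = 1) : IsUnimodularMultipleOn 1 (codeVector w x y z) := by
  have idem {t : S} (ht : t ^ 3 = 1) := isIdempotentElem_one_add_add_sq ht
  refine .of_idempotent (idem hx)
    (.of_idempotent (idem hy) (.of_idempotent (idem hw) ?_ ?_) (.of_idempotent (idem hw) ?_ ?_))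
    (.of_idempotent (idem hy) (.of_idempotent (idem hw) ?_ ?_) ?_)
  · -- `x = y = w = 1`: the vector vanishes
    refine .of_forall_mul_eq (k := 0) ![1, 0, 0, 0] (by simp) fun j => ?_
    fin_cases j <;> simp only [codeVector, Fin.reduceFinMk, Matrix.cons_val] <;> grind
  · -- `x = y = 1 ≠ w`: only `H` survives
    refine .of_forall_mul_eq (k := 2) ![0, 0, 1, 0] (by simp) fun j => ?_
    fin_cases j <;> simp only [codeVector, Fin.reduceFinMk, Matrix.cons_val] <;> grind
  · -- `x = w = 1 ≠ y`: only `G` survives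
    refine .of_forall_mul_eq (k := 1) ![0, 1, 0, 0] (by simp) fun j => ?_
    fin_cases j <;> simp only [codeVector, Fin.reduceFinMk, Matrix.cons_val] <;> grind
  · -- `x = 1 ≠ y, w`: `I = (1 + w)(1 + y)` is a unit
    refine .of_mul_eq_self (k := 3) (w * y) ?_
    simp only [codeVector, Matrix.cons_val]
    grind
  · -- `y = w = 1 ≠ x`: `F = H` and `G = I = 0`
    refine .of_forall_mul_eq (k := 0) ![1, 0, 1, 0] (by simp) fun j => ?_
    fin_cases j <;> simp only [codeVector, Fin.reduceFinMk, Matrix.cons_val] <;> grind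
  · -- `y = 1 ≠ x, w`: `I = (1 + w)(1 + x)` is a unit
    refine .of_mul_eq_self (k := 3) (w * x) ?_
    simp only [codeVector, Matrix.cons_val]
    grind
  · -- `x, y ≠ 1`: `F` is a unit, because `(1 + y * z) ^ 4 = 1 + y`
    refine .of_mul_eq_self (k := 0) (x * y * (1 + y * z) ^ 3) ?_
    simp only [codeVector, Matrix.cons_val]
    grind

lemma one_add_mul_one_add_mem_crossIdeal {ι : Type*} (t : ι → S) {i j : ι} (hij : i ≠ j) :
    (1 + t i) * (1 + t j) ∈ crossIdeal t := by
  convert mul_mem_crossIdeal t hij using 1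
  grind

lemma one_add_mul_one_add_mul_mem {J : Ideal S} {a b c : S} (hb : (1 + a) * (1 + b) ∈ J)
    (hc : (1 + a) * (1 + c) ∈ J) : (1 + a) * (1 + b * c) ∈ J := by
  convert J.add_mem hb (J.mul_mem_left b hc) using 1
  grind

lemma one_add_mul_one_add_mem_right {J : Ideal S} {a b c : S} (hb : b ^ 3 = 1)
    (hab : (1 + a) * (1 + b) ∈ J) (habc : (1 + a) * (1 + b * c) ∈ J) : (1 + a) * (1 + c) ∈ J := by
  convert J.mul_mem_left (b ^ 2) (J.sub_mem habc hab) using 1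
  grind

lemma one_add_mul_one_add_mem_left {J : Ideal S} {a b c : S} (hb : b ^ 3 = 1) (hc : c ^ 4 = 1)
    (habc : (1 + a) * (1 + b * c) ∈ J) : (1 + a) * (1 + b) ∈ J := by
  convert J.mul_mem_left ((1 + b * c) ^ 3) habc using 1
  grind

lemma span_range_codeVector (hw : w ^ 3 = 1) (hx : x ^ 3 = 1) (hy : y ^ 3 = 1) (hz : z ^ 4 = 1) :
    Ideal.span (Set.range (codeVector w x y z)) = crossIdeal ![w, x, y, z] := by
  apply le_antisymm
  · have hcross (i j : Fin 4) (hij : i ≠ j) :=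
      one_add_mul_one_add_mem_crossIdeal ![w, x, y, z] hij
    rw [Ideal.span_le]
    rintro _ ⟨j, rfl⟩
    fin_cases j
    · exact one_add_mul_one_add_mul_mem (hcross 1 2 (by decide)) (hcross 1 3 (by decide))
    · exact one_add_mul_one_add_mul_mem (hcross 2 3 (by decide)) (hcross 2 0 (by decide))
    · exact one_add_mul_one_add_mul_mem (hcross 3 0 (by decide)) (hcross 3 1 (by decide))
    · exact one_add_mul_one_add_mul_mem (hcross 0 1 (by decide)) (hcross 0 2 (by decide))
  · set J := Ideal.span (Set.range (codeVector w x y z))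
    have hF : (1 + x) * (1 + y * z) ∈ J := Ideal.subset_span ⟨0, rfl⟩
    have hG : (1 + y) * (1 + w * z) ∈ J := Ideal.subset_span ⟨1, by simp [codeVector, mul_comm]⟩
    have hH : (1 + z) * (1 + w * x) ∈ J := Ideal.subset_span ⟨2, rfl⟩
    have hI : (1 + w) * (1 + y * x) ∈ J := Ideal.subset_span ⟨3, by simp [codeVector, mul_comm]⟩
    have hxy := one_add_mul_one_add_mem_left hy hz hF
    have hyw := one_add_mul_one_add_mem_left hw hz hG
    have hxz := one_add_mul_one_add_mem_right hy hxy hF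
    have hyz := one_add_mul_one_add_mem_right hw hyw hG
    have hwx := one_add_mul_one_add_mem_right hy (mul_comm (1 + y) _ ▸ hyw) hI
    have hzw := one_add_mul_one_add_mem_right hx (mul_comm (1 + x) _ ▸ hxz) (mul_comm w x ▸ hH)
    refine crossIdeal_le fun i j hij => ?_
    simp only [CharTwo.sub_eq_add]
    fin_cases i <;> fin_cases j <;> simp only [Fin.reduceFinMk, Matrix.cons_val] <;> grind

end CodeVector

section CodeAlgebra

instance (i : Fin 4) : NeZero ((![3, 3, 3, 4] : Fin 4 → ℕ) i) :=
  ⟨by fin_cases i <;> decide⟩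

lemma relIdeal_eq : relIdeal = rootsOfUnityIdeal (ZMod 2) ![3, 3, 3, 4] := by
  rw [relIdeal, rootsOfUnityIdeal]
  congr 1
  ext p
  simp [Fin.exists_fin_succ, eq_comm]

lemma finrank_squot : Module.finrank (ZMod 2) Squot = 108 := by
  unfold Squot
  rw [relIdeal_eq, finrank_rootsOfUnityAlgebra]
  rfl

instance : FiniteDimensional (ZMod 2) Squot :=
  Module.finite_of_finrank_pos (by rw [finrank_squot]; norm_num)

instance : Nontrivial Squot :=
  Module.nontrivial_of_finrank_pos (R := ZMod 2) (by rw [finrank_squot]; norm_num)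

instance : CharP Squot 2 := charP_of_injective_algebraMap' (ZMod 2) 2

lemma mk_relIdeal_X_pow (i : Fin 4) :
    Ideal.Quotient.mk relIdeal (X i) ^ (![3, 3, 3, 4] : Fin 4 → ℕ) i = 1 := by
  rw [relIdeal_eq, mk_X_pow]

lemma wq_pow_three : wq ^ 3 = 1 := mk_relIdeal_X_pow 0

lemma xq_pow_three : xq ^ 3 = 1 := mk_relIdeal_X_pow 1

lemma yq_pow_three : yq ^ 3 = 1 := mk_relIdeal_X_pow 2

lemma zq_pow_four : zq ^ 4 = 1 := mk_relIdeal_X_pow 3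

lemma finrank_quotient_crossIdeal_squot :
    Module.finrank (ZMod 2) (Squot ⧸ crossIdeal ![wq, xq, yq, zq]) = 10 := by
  have hcoord : ![wq, xq, yq, zq] = fun i => Ideal.Quotient.mk relIdeal (X i) := by
    ext1 i
    fin_cases i <;> rfl
  unfold Squot
  rw [hcoord, relIdeal_eq, finrank_quotient_crossIdeal]
  rfl

end CodeAlgebra

/-- With `S = 𝔽₂[w,x,y,z]/⟨w³−1, x³−1, y³−1, z⁴−1⟩` (108-dimensional over
`𝔽₂`) and `F = (1+x)(1+yz)`, `G = (1+y)(1+zw)`, `H = (1+z)(1+wx)`,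
`I = (1+w)(1+xy)`, the `𝔽₂`-linear maps `d₂ : S⁶ → S⁴` and `d₃ : S⁴ → S⁶`
given by the Koszul block matrices `D₂`, `D₃` (between spaces of dimensions
648 and 432) satisfy `d₂ ∘ d₃ = 0` and `dim ker d₂ − dim im d₃ = 60`: this
multivariate multicycle code encodes `k = 60` logical qubits in `n = 648`
physical qubits. -/
theorem mm_code_648_60 :
    Module.finrank (ZMod 2) Squot = 108 ∧
    Module.finrank (ZMod 2) (Fin 6 → Squot) = 648 ∧
    Module.finrank (ZMod 2) (Fin 4 → Squot) = 432 ∧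
    (D2.mulVecLin.restrictScalars (ZMod 2)) ∘ₗ
      (D3.mulVecLin.restrictScalars (ZMod 2)) = 0 ∧
    Module.finrank (ZMod 2)
        (LinearMap.ker (D2.mulVecLin.restrictScalars (ZMod 2))) -
      Module.finrank (ZMod 2)
        (LinearMap.range (D3.mulVecLin.restrictScalars (ZMod 2))) = 60 := by
  have hD2 : D2 = koszulTwo (codeVector wq xq yq zq) := rfl
  have hD3 : D3 = koszulThree (codeVector wq xq yq zq) := rfl
  have hunimodular : IsUnimodularMultipleOn 1 (codeVector wq xq yq zq) :=
    isUnimodularMultipleOn_one_codeVector wq_pow_three xq_pow_three yq_pow_three zq_pow_four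
  have hspan : Ideal.span (Set.range (codeVector wq xq yq zq)) = crossIdeal ![wq, xq, yq, zq] :=
    span_range_codeVector wq_pow_three xq_pow_three yq_pow_three zq_pow_four
  refine ⟨finrank_squot, ?_, ?_, LinearMap.ext fun v => ?_, ?_⟩
  · simp [Module.finrank_pi_fintype, finrank_squot]
  · simp [Module.finrank_pi_fintype, finrank_squot]
  · change D2 *ᵥ (D3 *ᵥ v) = 0
    rw [Matrix.mulVec_mulVec, hD2, hD3, koszulTwo_mul_koszulThree, Matrix.zero_mulVec]
  · rw [hD2, hD3, finrank_ker_koszulTwo hunimodular, hspan, finrank_quotient_crossIdeal_squot,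
      add_tsub_cancel_left]

end
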